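/- Let S = ℂ[x₁,…,xₙ] and let g₁,…,gₛ ∈ S be homogeneous polynomials of positive degree forming a regular sequence, and let R = ℂ[g₁,…,gₛ] ⊆ S be the subalgebra they generate. Then S is a free (in particular flat) R-module. -/

import Mathlib

open MvPolynomial

/-!
Let `A` be an `ℕ`-graded `k`-algebra, such as `ℂ[x₁,…,xₙ]`. Homogeneous elements `b j` of `A`
lifting a `k`-basis of `A / (g)` form a basis of `A` over `k[g]`.

* Independence. Multiplication by `g₁` is injective, so the multiples by `1, g₁, g₁², …` of a family
  independent modulo `g₁ A` are jointly independent: in a relation the terms with the lowest power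
  of `g₁` cancel modulo `g₁ A`, and what remains can be divided by `g₁`. Going through the regular
  sequence, the products `g ^ α * b j` are independent over `k`. As the monomials `g ^ α` span
  `k[g]`, this makes the `b j` independent over `k[g]`.
* Spanning. Modulo the `k`-span of the `b j`, a homogeneous `f` is `∑ i, g i * h i` with `h i` of
  degree `deg f - deg (g i) < deg f`, so induction on the degree applies.
-/

theorem linearIndependent_of_smul_of_span_eq_top {k R M ι κ : Type*} [Semiring k] [Semiring R]
    [AddCommMonoid M] [Module k R] [Module k M] [Module R M] [IsScalarTower k R M]
    {e : ι → R} (he : Submodule.span k (Set.range e) = ⊤) {b : κ → M}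
    (heb : LinearIndependent k fun p : ι × κ ↦ e p.1 • b p.2) :
    LinearIndependent R b := by
  let expand : (ι × κ →₀ k) →ₗ[k] κ →₀ R :=
    Finsupp.linearCombination k fun p ↦ Finsupp.single p.2 (e p.1)
  have expand_surjective : Function.Surjective expand := by
    rw [← LinearMap.range_eq_top, eq_top_iff]
    intro l _
    induction l using Finsupp.induction_linear with
    | zero => exact zero_mem _
    | add _ _ h h' => exact add_mem (h trivial) (h' trivial)
    | single j r =>
      have hr : r ∈ Submodule.span k (Set.range e) := he ▸ trivial
      have hsingle : Finsupp.single j r ∈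
          (Submodule.span k (Set.range e)).map (Finsupp.lsingle (R := k) j) :=
        Submodule.mem_map_of_mem hr
      rw [Submodule.map_span, ← Set.range_comp] at hsingle
      refine Submodule.span_le.mpr ?_ hsingle
      rintro _ ⟨i, rfl⟩
      exact ⟨Finsupp.single (i, j) 1, by simp [expand]⟩
  refine Function.Injective.of_comp_right (g := expand) ?_ expand_surjective
  rw [LinearIndependent] at heb
  convert heb
  funext l
  induction l using Finsupp.induction_linear with
  | zero => simp
  | add _ _ h h' => simp_all
  | single p c => simp [expand]

theorem span_prod_pow_eq_adjoin {k A ι : Type*} [CommSemiring k] [CommSemiring A] [Algebra k A]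
    [Fintype ι] (g : ι → A) :
    Submodule.span k (Set.range fun α : ι → ℕ ↦ ∏ i, g i ^ α i) =
      Subalgebra.toSubmodule (Algebra.adjoin k (Set.range g)) := by
  rw [Algebra.adjoin_eq_span]
  congr 1
  ext x
  simp [Submonoid.mem_closure_range_iff_of_fintype, eq_comm]

section RegularSequence

variable {k A M κ : Type*} [CommRing k] [CommRing A] [Algebra k A]
  [AddCommGroup M] [Module k M] [Module A M] [IsScalarTower k A M]

open scoped Pointwise in
theorem linearIndependent_fin_pow_smul {x : A} (hx : IsSMulRegular M x) {w : κ → M}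
    (hw : LinearIndependent k fun j ↦ (Submodule.Quotient.mk (w j) : QuotSMulTop x M)) (n : ℕ) :
    LinearIndependent k fun p : Fin n × κ ↦ x ^ (p.1 : ℕ) • w p.2 := by
  induction n with
  | zero => exact linearIndependent_empty_type
  | succ n ih =>
    let N : Submodule k M := (x • ⊤ : Submodule A M).restrictScalars k
    let mulX : M →ₗ[k] N := (Algebra.lsmul k k M x).codRestrict N fun y ↦
      Submodule.smul_mem_pointwise_smul y x ⊤ trivial
    have mulX_injective : Function.Injective mulX := fun _ _ h ↦ hx (congrArg Subtype.val h)
    have hw' : LinearIndependent k (Submodule.Quotient.mk (p := N) ∘ w) := hw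
    have hsum := (ih.map' mulX (LinearMap.ker_eq_bot.mpr mulX_injective)).sumElim_of_quotient w hw'
    let e : Fin (n + 1) × κ → (Fin n × κ) ⊕ κ := fun p ↦
      Fin.cases (.inr p.2) (fun i ↦ .inl (i, p.2)) p.1
    have e_injective : Function.Injective e := by
      rintro ⟨i, j⟩ ⟨i', j'⟩ h
      cases i using Fin.cases <;> cases i' using Fin.cases <;> simp_all [e]
    convert! hsum.comp e e_injective using 1
    funext ⟨i, j⟩
    cases i using Fin.cases with
    | zero => simp [e]
    | succ i => rw [Fin.val_succ, pow_succ', mul_smul]; rfl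

theorem linearIndependent_pow_smul {x : A} (hx : IsSMulRegular M x) {w : κ → M}
    (hw : LinearIndependent k fun j ↦ (Submodule.Quotient.mk (w j) : QuotSMulTop x M)) :
    LinearIndependent k fun p : ℕ × κ ↦ x ^ p.1 • w p.2 := by
  rw [linearIndependent_iff_finset_linearIndependent]
  intro t
  have lt_bound (p : t) : p.1.1 < t.sup Prod.fst + 1 :=
    Nat.lt_succ_of_le (Finset.le_sup (f := Prod.fst) p.2)
  refine (linearIndependent_fin_pow_smul hx hw _).comp (fun p : t ↦ (⟨p.1.1, lt_bound p⟩, p.1.2)) ?_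
  intro p q h
  simp only [Prod.mk.injEq, Fin.mk.injEq] at h
  exact Subtype.ext (Prod.ext h.1 h.2)

theorem linearIndependent_prod_pow_smul {s : ℕ} {g : Fin s → A}
    (hg : RingTheory.Sequence.IsWeaklyRegular M (List.ofFn g)) {b : κ → M}
    (hb : LinearIndependent k fun j ↦
      (Submodule.Quotient.mk (b j) : M ⧸ (Ideal.ofList (List.ofFn g) • ⊤ : Submodule A M))) :
    LinearIndependent k fun p : (Fin s → ℕ) × κ ↦ (∏ i, g i ^ p.1 i) • b p.2 := by
  induction s generalizing M with
  | zero =>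
    have hb' : LinearIndependent k b :=
      .of_comp ((Submodule.mkQ _).restrictScalars k) hb
    have snd_injective : Function.Injective (Prod.snd : (Fin 0 → ℕ) × κ → κ) :=
      fun p q h ↦ Prod.ext (Subsingleton.elim p.1 q.1) h
    simpa [Function.comp_def] using hb'.comp Prod.snd snd_injective
  | succ s ih =>
    rw [List.ofFn_succ, RingTheory.Sequence.isWeaklyRegular_cons_iff] at hg
    rw [List.ofFn_succ] at hb
    let e := (Submodule.quotOfListConsSMulTopEquivQuotSMulTopInner M (g 0)
      (List.ofFn fun i ↦ g i.succ)).restrictScalars k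
    have htail := ih hg.2 (hb.map' e.toLinearMap e.ker)
    have hall := linearIndependent_pow_smul hg.1
      (w := fun p : (Fin s → ℕ) × κ ↦ (∏ i, g i.succ ^ p.1 i) • b p.2) htail
    let split : (Fin (s + 1) → ℕ) × κ ≃ ℕ × (Fin s → ℕ) × κ :=
      ((Fin.consEquiv fun _ ↦ ℕ).symm.prodCongr (.refl κ)).trans (.prodAssoc ..)
    convert hall.comp split split.injective using 1
    funext p
    simp [split, Fin.prod_univ_succ, mul_smul, Fin.consEquiv, Fin.tail]

theorem linearIndependent_adjoin_of_isWeaklyRegular {s : ℕ} {g : Fin s → A}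
    (hg : RingTheory.Sequence.IsWeaklyRegular M (List.ofFn g)) {b : κ → M}
    (hb : LinearIndependent k fun j ↦
      (Submodule.Quotient.mk (b j) : M ⧸ (Ideal.ofList (List.ofFn g) • ⊤ : Submodule A M))) :
    LinearIndependent (Algebra.adjoin k (Set.range g)) b := by
  let R := Algebra.adjoin k (Set.range g)
  let monomials (α : Fin s → ℕ) : R := ∏ i, ⟨g i, Algebra.subset_adjoin ⟨i, rfl⟩⟩ ^ α i
  have coe_monomials (α : Fin s → ℕ) : (monomials α : A) = ∏ i, g i ^ α i := by simp [monomials]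
  have span_monomials : Submodule.span k (Set.range monomials) = ⊤ := by
    refine Submodule.map_injective_of_injective (f := R.toSubmodule.subtype)
      Subtype.val_injective ?_
    rw [Submodule.map_span, ← Set.range_comp, Submodule.map_subtype_top]
    simpa only [Function.comp_def, Submodule.subtype_apply, coe_monomials] using
      span_prod_pow_eq_adjoin g
  refine linearIndependent_of_smul_of_span_eq_top span_monomials ?_
  simpa only [Subalgebra.smul_def, coe_monomials] using linearIndependent_prod_pow_smul hg hb

end RegularSequence

theorem exists_homogeneous_linearIndepOn_mkQ {k ι M : Type*} [DivisionRing k] [AddCommGroup M]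
    [Module k M] [DecidableEq ι] (ℳ : ι → Submodule k M) [DirectSum.Decomposition ℳ]
    (p : Submodule k M) :
    ∃ B : Set M, (∀ f ∈ B, SetLike.IsHomogeneousElem ℳ f) ∧ LinearIndepOn k p.mkQ B ∧
      p ⊔ Submodule.span k B = ⊤ := by
  have span_homogeneous : Submodule.span k {f | SetLike.IsHomogeneousElem ℳ f} = ⊤ := by
    rw [eq_top_iff, ← (DirectSum.Decomposition.isInternal ℳ).submodule_iSup_eq_top]
    exact iSup_le fun i f hf ↦ Submodule.subset_span ⟨i, hf⟩
  obtain ⟨B, hB, -, hspan, hli⟩ := exists_linearIndepOn_extension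
    (linearIndepOn_empty k p.mkQ) (Set.empty_subset {f | SetLike.IsHomogeneousElem ℳ f})
  refine ⟨B, hB, hli, ?_⟩
  rw [← Submodule.map_mkQ_eq_top, Submodule.map_span, eq_top_iff, ← p.range_mkQ,
    ← Submodule.map_top, ← span_homogeneous, Submodule.map_span]
  exact Submodule.span_le.mpr hspan

theorem span_adjoin_eq_top_of_ideal_span_sup_eq_top {k A : Type*} [CommSemiring k]
    [CommSemiring A] [Algebra k A] (𝒜 : ℕ → Submodule k A) [GradedAlgebra 𝒜]
    {ι : Type*} {g : ι → A} {d : ι → ℕ} (hd : ∀ i, 0 < d i) (hg : ∀ i, g i ∈ 𝒜 (d i))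
    {B : Set A} (hB : ∀ f ∈ B, SetLike.IsHomogeneousElem 𝒜 f)
    (hgB : (Ideal.span (Set.range g)).restrictScalars k ⊔ Submodule.span k B = ⊤) :
    Submodule.span (Algebra.adjoin k (Set.range g)) B = ⊤ := by
  set N := Submodule.span (Algebra.adjoin k (Set.range g)) B
  have g_mul_mem (i : ι) {f : A} (hf : f ∈ N) : g i * f ∈ N :=
    N.smul_mem ⟨g i, Algebra.subset_adjoin ⟨i, rfl⟩⟩ hf
  have proj_span_mem (m : ℕ) :
      Submodule.span k B ≤ (N.restrictScalars k).comap (GradedAlgebra.proj 𝒜 m) := by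
    rw [Submodule.span_le]
    intro f hf
    obtain ⟨i, hi⟩ := hB f hf
    by_cases him : i = m
    · subst him
      simpa [DirectSum.decompose_of_mem_same 𝒜 hi] using Submodule.subset_span hf
    · simp [DirectSum.decompose_of_mem_ne 𝒜 hi him]
  have proj_mem (m : ℕ) : ∀ f, GradedAlgebra.proj 𝒜 m f ∈ N := by
    induction m using Nat.strong_induction_on with
    | _ m ih =>
    intro f
    obtain ⟨h, hh, w, hw, rfl⟩ := Submodule.mem_sup.mp (hgB ▸ Submodule.mem_top : f ∈ _ ⊔ _)
    rw [map_add]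
    refine add_mem ?_ (proj_span_mem m hw)
    obtain ⟨c, rfl⟩ := Finsupp.mem_span_range_iff_exists_finsupp.mp hh
    rw [Finsupp.sum, map_sum]
    refine sum_mem fun i _ ↦ ?_
    rw [smul_eq_mul, mul_comm, GradedAlgebra.proj_apply,
      DirectSum.coe_decompose_mul_of_left_mem 𝒜 m (hg i)]
    split_ifs with hm
    · exact g_mul_mem i (ih (m - d i) (Nat.sub_lt_of_pos_le (hd i) hm) (c i))
    · exact zero_mem N
  classical
  refine eq_top_iff.mpr fun f _ ↦ ?_
  rw [← DirectSum.sum_support_decompose 𝒜 f]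
  exact sum_mem fun m _ ↦ proj_mem m f

theorem stmt_11_general {k A : Type*} [Field k] [CommRing A] [Algebra k A]
    (𝒜 : ℕ → Submodule k A) [GradedAlgebra 𝒜] {s : ℕ} {g : Fin s → A} {d : Fin s → ℕ}
    (hd : ∀ i, 0 < d i) (hg : ∀ i, g i ∈ 𝒜 (d i))
    (hreg : RingTheory.Sequence.IsWeaklyRegular A (List.ofFn g)) :
    Module.Free (Algebra.adjoin k (Set.range g)) A := by
  let I : Ideal A := Ideal.ofList (List.ofFn g) • ⊤
  have hI : I = Ideal.span (Set.range g) := by simp [I, Ideal.ofList, List.mem_ofFn, Set.range]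
  obtain ⟨B, hB, hli, hspan⟩ := exists_homogeneous_linearIndepOn_mkQ 𝒜 (I.restrictScalars k)
  have B_independent : LinearIndependent (Algebra.adjoin k (Set.range g)) ((↑) : B → A) :=
    linearIndependent_adjoin_of_isWeaklyRegular hreg hli
  have B_spans : Submodule.span (Algebra.adjoin k (Set.range g)) B = ⊤ :=
    span_adjoin_eq_top_of_ideal_span_sup_eq_top 𝒜 hd hg hB (hI ▸ hspan)
  exact .of_basis (.mk B_independent (by rw [Subtype.range_coe, B_spans]))

/-- If `g₁,…,gₛ` are homogeneous polynomials of positive degree in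
`S = ℂ[x₁,…,xₙ]` forming a regular sequence, then `S` is a free (in
particular, flat) module over the subalgebra `R = ℂ[g₁,…,gₛ]` that they
generate. -/
theorem stmt_11 (n s : ℕ) (g : Fin s → MvPolynomial (Fin n) ℂ)
    (d : Fin s → ℕ) (hd : ∀ i, 0 < d i)
    (hhom : ∀ i, (g i).IsHomogeneous (d i))
    (hreg : RingTheory.Sequence.IsRegular (MvPolynomial (Fin n) ℂ) (List.ofFn g)) :
    Module.Free (Algebra.adjoin ℂ (Set.range g)) (MvPolynomial (Fin n) ℂ) ∧
    Module.Flat (Algebra.adjoin ℂ (Set.range g)) (MvPolynomial (Fin n) ℂ) := by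
  let := gradedAlgebra (σ := Fin n) (R := ℂ)
  have free := stmt_11_general (homogeneousSubmodule (Fin n) ℂ) hd hhom hreg.toIsWeaklyRegular
  exact ⟨free, inferInstance⟩
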